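/- For the win-lose game G = G(Ĝ, φ) constructed from an r-player win-lose game Ĝ with the positive utility property and a 3SAT formula φ with n ≥ 4 variables: if φ is satisfiable, then for each satisfying assignment γ of φ, the mixed profile σ = σ(γ) in which each special player i ∈ {1,2} plays each of the n literals set true by γ with probability 1/n and each player i ∈ {3,…,r} plays δ with probability 1, is a Nash equilibrium of G not belonging to NE(Ĝ); moreover σ_1 = σ_2 and for each i ∈ {1,2}: |Supp(σ_i)| = n, U_i(σ) = 2/n, and Supp(σ_i) ∩ Σ̂_i = ∅. -/

import Mathlib

open Finset

/-! ## Basic notions for finite strategic games -/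

/-- `x` is a probability distribution on the finite type `α`. -/
def IsDist {α : Type*} [Fintype α] (x : α → ℝ) : Prop :=
  (∀ s, 0 ≤ x s) ∧ ∑ s, x s = 1

/-- Expected utility of player `i` in the mixed profile `σ`. -/
noncomputable def EU {ι : Type*} [Fintype ι] [DecidableEq ι] {S : ι → Type*}
    [∀ i, Fintype (S i)] (U : (i : ι) → (∀ j, S j) → ℝ)
    (σ : ∀ j, S j → ℝ) (i : ι) : ℝ :=
  ∑ s : ∀ j, S j, (∏ j, σ j (s j)) * U i s

/-- `σ` is a (mixed) Nash equilibrium of the game with utilities `U`. -/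
def IsNashEq {ι : Type*} [Fintype ι] [DecidableEq ι] {S : ι → Type*} [∀ i, Fintype (S i)]
    (U : (i : ι) → (∀ j, S j) → ℝ) (σ : ∀ j, S j → ℝ) : Prop :=
  (∀ i, IsDist (σ i)) ∧
    ∀ (i : ι) (τ : S i → ℝ), IsDist τ →
      EU U (Function.update σ i τ) i ≤ EU U σ i

/-! ## The player and strategy sets of the game `G(Ĝ, φ)` -/

/-- The players: the two special players (`Sum.inl`), plus `k` further players. -/
abbrev Player (k : ℕ) : Type := Fin 2 ⊕ Fin k

/-- A literal `ℓ_j` (second component `true`) or `ℓ̄_j` (second component `false`). -/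
abbrev Lit (n : ℕ) : Type := Fin n × Bool

/-- A pair variable `v_{j,k}` with `j ≠ k`. -/
abbrev PairVar (n : ℕ) : Type := {p : Fin n × Fin n // p.1 ≠ p.2}

/-- The non-gadget strategies of a special player: literals, clauses and pair variables. -/
abbrev SpecialAux (n m : ℕ) : Type := Lit n ⊕ (Fin m ⊕ PairVar n)

/-- The strategy set of each player of `G(Ĝ, φ)`: gadget strategies together with the
literals, clauses and pair variables (for the special players), resp. the single extra
strategy `δ` (for the non-special players). -/
def Strat {k : ℕ} (Shat : Player k → Type) (n m : ℕ) : Player k → Type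
  | .inl p => Shat (.inl p) ⊕ SpecialAux n m
  | .inr q => Shat (.inr q) ⊕ PUnit

instance {k n m : ℕ} (Shat : Player k → Type) [∀ i, Fintype (Shat i)]
    (i : Player k) : Fintype (Strat Shat n m i) := by
  cases i with
  | inl p => exact inferInstanceAs (Fintype (Shat (.inl p) ⊕ SpecialAux n m))
  | inr q => exact inferInstanceAs (Fintype (Shat (.inr q) ⊕ PUnit))

/-- The gadget strategy underlying a strategy of `G(Ĝ, φ)`, if any. -/
def toGadget {k n m : ℕ} (Shat : Player k → Type) :
    ∀ i : Player k, Strat Shat n m i → Option (Shat i)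
  | .inl _, .inl a => some a
  | .inl _, .inr _ => none
  | .inr _, .inl a => some a
  | .inr _, .inr _ => none

/-- The strategy chosen by the special player `q` in the profile `s`. -/
def specialOf {k n m : ℕ} (Shat : Player k → Type) (q : Fin 2)
    (s : ∀ j, Strat Shat n m j) : Shat (.inl q) ⊕ SpecialAux n m :=
  s (.inl q)

/-- The other special player. -/
def otherP : Fin 2 → Fin 2 := fun p => if p = 0 then 1 else 0

/-- Whether a strategy of a special player lies in `{ℓ₀, ℓ̄₀, ℓ₁, ℓ̄₁} ∪ 𝒞 ∪ V`
(Case (10) of the utility table). -/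
def allowedB {n m : ℕ} {α : Type*} : α ⊕ SpecialAux n m → Bool
  | .inl _ => false
  | .inr (.inl l) => decide (l.1.val ≤ 1)
  | .inr (.inr _) => true

/-- Utilities ⟨player 1, player 2, each non-special player⟩ in a profile in which the
special players choose the non-gadget strategies `a₁`, `a₂` and every non-special player
chooses `δ` (Cases (1)–(6) and part of Case (11) of the utility table).  The cyclic
difference `I(ℓ′) − I(ℓ)` is computed as `(I(ℓ′) + n − I(ℓ)) % n`. -/
noncomputable def pairU {n m : ℕ} (Cl : Fin m → Finset (Lit n)) :
    SpecialAux n m → SpecialAux n m → ℝ × ℝ × ℝ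
  | .inl l, .inl l' =>
      if l' = (l.1, !l.2) then (0, 0, 1)
      else if (l'.1.val + n - l.1.val) % n ≤ 1 then (1, 0, 1)
      else if (l'.1.val + n - l.1.val) % n ≤ 3 then (0, 1, 1)
      else (0, 0, 1)
  | .inl l, .inr (.inl c) => if (l.1, !l.2) ∈ Cl c then (0, 1, 1) else (0, 0, 0)
  | .inl l, .inr (.inr v) => if l.1 = v.1.1 ∨ l.1 = v.1.2 then (0, 1, 1) else (0, 0, 0)
  | .inr (.inl c), .inl l => if (l.1, !l.2) ∈ Cl c then (1, 0, 1) else (0, 0, 0)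
  | .inr (.inr v), .inl l => if l.1 = v.1.1 ∨ l.1 = v.1.2 then (1, 0, 1) else (0, 0, 0)
  | .inr _, .inr _ => (0, 0, 0)

/-- The utility function of the game `G(Ĝ, φ)`, following Cases (1)–(11) of the
utility table. -/
noncomputable def BigU {k n m : ℕ} (Shat : Player k → Type) [∀ i, Fintype (Shat i)]
    (Uhat : (i : Player k) → (∀ j, Shat j) → ℝ) (Cl : Fin m → Finset (Lit n))
    (i : Player k) (s : ∀ j, Strat Shat n m j) : ℝ :=
  -- Case (7): all players choose gadget strategies
  if h : ∀ j, (toGadget Shat j (s j)).isSome = true then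
    Uhat i (fun j => (toGadget Shat j (s j)).get (h j))
  -- Case (8): at least two, but not all, players choose gadget strategies
  else if 1 < (univ.filter fun j => (toGadget Shat j (s j)).isSome = true).card then
    if (toGadget Shat i (s i)).isSome then 1 else 0
  -- Cases (9), (10), (11): exactly one player chooses a gadget strategy
  else if (univ.filter fun j => (toGadget Shat j (s j)).isSome = true).card = 1 then
    if (toGadget Shat i (s i)).isSome then
      match i with
      | .inl p => if allowedB (specialOf Shat (otherP p) s) then 1 else 0
      | .inr _ => 1
    else 0
  -- Cases (1)–(6), (11): no player chooses a gadget strategy, so every non-special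
  -- player chooses `δ` and the special players choose non-gadget strategies
  else
    match specialOf Shat 0 s, specialOf Shat 1 s with
    | .inr a₁, .inr a₂ =>
        (match i with
         | .inl p => if p = 0 then (pairU Cl a₁ a₂).1 else (pairU Cl a₁ a₂).2.1
         | .inr _ => (pairU Cl a₁ a₂).2.2)
    | _, _ => 0

/-- A mixed profile of the gadget game `Ĝ`, regarded as a mixed profile of `G(Ĝ, φ)`
via the inclusions `Σ̂ᵢ ⊆ Σᵢ`. -/
def liftProfile {k n m : ℕ} (Shat : Player k → Type)
    (σh : ∀ i, Shat i → ℝ) : ∀ i, Strat Shat n m i → ℝ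
  | .inl p => Sum.elim (σh (.inl p)) (fun _ => 0)
  | .inr q => Sum.elim (σh (.inr q)) (fun _ => 0)

/-- The strategy "literal `(j, b)`" of the special player `p`. -/
def litStrat {k n m : ℕ} (Shat : Player k → Type) (p : Fin 2) (j : Fin n) (b : Bool) :
    Strat Shat n m (Sum.inl p) :=
  Sum.inr (Sum.inl (j, b))

/-- The strategy `δ` of the non-special player `q`. -/
def deltaStrat {k n m : ℕ} (Shat : Player k → Type) (q : Fin k) :
    Strat Shat n m (Sum.inr q) :=
  Sum.inr PUnit.unit

/-- The assignment `γ` satisfies the 3SAT formula with clauses `Cl`. -/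
def Satisfies {n m : ℕ} (Cl : Fin m → Finset (Lit n)) (γ : Fin n → Bool) : Prop :=
  ∀ c, ∃ l ∈ Cl c, γ l.1 = l.2

/-- The mixed profile `σ(γ)` of `G(Ĝ, φ)` associated with an assignment `γ`:
each special player plays each of the `n` literals set true by `γ` with probability
`1/n`, and each non-special player plays `δ` with probability `1`. -/
noncomputable def assignProfile {k n : ℕ} (m : ℕ) (Shat : Player k → Type)
    (γ : Fin n → Bool) : ∀ i, Strat Shat n m i → ℝ
  | .inl _ => fun t =>
      match t with
      | .inr (.inl l) => if γ l.1 = l.2 then 1 / (n : ℝ) else 0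
      | _ => 0
  | .inr _ => fun t =>
      match t with
      | .inr _ => 1
      | .inl _ => 0

/-! ## Helper lemmas -/

/-- A non-gadget strategy of the special player `p`. -/
def auxS {k n m : ℕ} (Shat : Player k → Type) (p : Fin 2) (a : SpecialAux n m) :
    Strat Shat n m (Sum.inl p) :=
  Sum.inr a

/-- A gadget strategy of the special player `p`. -/
def gadS {k n m : ℕ} (Shat : Player k → Type) (p : Fin 2) (a : Shat (Sum.inl p)) :
    Strat Shat n m (Sum.inl p) :=
  Sum.inl a

/-- The pure profile in which special players play the true literal of index `j`. -/
def baseProf {k n : ℕ} (m : ℕ) (Shat : Player k → Type) (γ : Fin n → Bool) (j : Fin n) :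
    ∀ i, Strat Shat n m i
  | .inl p => litStrat Shat p j (γ j)
  | .inr q => deltaStrat Shat q

theorem assign_isDist {k n : ℕ} (m : ℕ) (hn : 4 ≤ n) (Shat : Player k → Type)
    [∀ i, Fintype (Shat i)] (γ : Fin n → Bool) (i : Player k) :
    IsDist (assignProfile m Shat γ i) := by
  have hn0 : (n : ℝ) ≠ 0 := by
    have : n ≠ 0 := by omega
    exact_mod_cast this
  rcases i with p | q
  · constructor
    · rintro (a | l | c)
      · exact le_refl _
      · change (0 : ℝ) ≤ if γ l.1 = l.2 then 1 / (n : ℝ) else 0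
        split_ifs <;> positivity
      · exact le_refl _
    · refine (Fintype.sum_sum_type (α₁ := Shat (.inl p)) (α₂ := SpecialAux n m)
        (assignProfile m Shat γ (Sum.inl p))).trans ?_
      rw [Fintype.sum_sum_type]
      change ∑ a : Shat (.inl p), (0 : ℝ) + (∑ l : Lit n, (if γ l.1 = l.2 then 1 / (n : ℝ) else 0)
        + ∑ c : Fin m ⊕ PairVar n, (0 : ℝ)) = 1
      rw [Fintype.sum_prod_type]
      simp [hn0]
  · constructor
    · rintro (a | u)
      · exact le_refl _
      · exact zero_le_one
    · refine (Fintype.sum_sum_type (α₁ := Shat (.inr q)) (α₂ := PUnit)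
        (assignProfile m Shat γ (Sum.inr q))).trans ?_
      change ∑ a : Shat (.inr q), (0 : ℝ) + ∑ u : PUnit, (1 : ℝ) = 1
      simp

theorem assign_ne {k n m : ℕ} {Shat : Player k → Type} {γ : Fin n → Bool} {p : Fin 2}
    {t : Strat Shat n m (Sum.inl p)} (h : assignProfile m Shat γ (Sum.inl p) t ≠ 0) :
    ∃ j, t = litStrat Shat p j (γ j) := by
  rcases t with a | ⟨j, b⟩ | c
  · exact absurd rfl h
  · change (if γ j = b then 1 / (n : ℝ) else 0) ≠ 0 at h
    have : γ j = b := by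
      by_contra h'
      simp [h'] at h
    subst this
    exact ⟨j, rfl⟩
  · exact absurd rfl h

theorem assign_ne' {k n m : ℕ} {Shat : Player k → Type} {γ : Fin n → Bool} {q : Fin k}
    {t : Strat Shat n m (Sum.inr q)} (h : assignProfile m Shat γ (Sum.inr q) t ≠ 0) :
    t = deltaStrat Shat q := by
  rcases t with a | u
  · exact absurd rfl h
  · rfl

theorem assign_lit {k n m : ℕ} {Shat : Player k → Type} {γ : Fin n → Bool} {p : Fin 2}
    (j : Fin n) : assignProfile m Shat γ (Sum.inl p) (litStrat Shat p j (γ j)) = 1 / (n : ℝ) := by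
  change (if γ j = γ j then 1 / (n : ℝ) else 0) = _
  simp

theorem otherP_ne (p : Fin 2) : otherP p ≠ p := by
  fin_cases p <;> decide

theorem eq_or_otherP (p q : Fin 2) : q = p ∨ q = otherP p := by
  fin_cases p <;> fin_cases q <;> decide

theorem prod_two (p : Fin 2) (f : Fin 2 → ℝ) : ∏ q, f q = f p * f (otherP p) := by
  rw [Fin.prod_univ_two]
  fin_cases p
  · rfl
  · exact mul_comm _ _

theorem EU_update {k n m : ℕ} (Shat : Player k → Type) [∀ i, Fintype (Shat i)]
    (γ : Fin n → Bool) (U : (i : Player k) → (∀ j, Strat Shat n m j) → ℝ) (p : Fin 2)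
    (τ : Strat Shat n m (Sum.inl p) → ℝ) :
    EU U (Function.update (assignProfile m Shat γ) (Sum.inl p) τ) (Sum.inl p) =
      ∑ t, τ t * ∑ j : Fin n, 1 / (n : ℝ) *
        U (Sum.inl p) (Function.update (baseProf m Shat γ j) (Sum.inl p) t) := by
  have hne : (Sum.inl (otherP p) : Player k) ≠ Sum.inl p := by
    intro h
    exact otherP_ne p (Sum.inl.inj h)
  have hprod : ∀ s : ∀ j, Strat Shat n m j,
      (∏ j, (Function.update (assignProfile m Shat γ) (Sum.inl p) τ) j (s j)) =
      τ (s (Sum.inl p)) * assignProfile m Shat γ (Sum.inl (otherP p)) (s (Sum.inl (otherP p))) *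
        ∏ q : Fin k, assignProfile m Shat γ (Sum.inr q) (s (Sum.inr q)) := by
    intro s
    rw [Fintype.prod_sum_type, prod_two p]
    congr 1
    · rw [Function.update_self, Function.update_of_ne hne]
  unfold EU
  simp_rw [hprod, Finset.mul_sum]
  rw [← Fintype.sum_prod_type']
  symm
  apply Finset.sum_of_injOn (fun x : Strat Shat n m (Sum.inl p) × Fin n =>
    Function.update (baseProf m Shat γ x.2) (Sum.inl p) x.1)
  · rintro ⟨t, j⟩ - ⟨t', j'⟩ - h
    have h1 := congrFun h (Sum.inl p)
    have h2 := congrFun h (Sum.inl (otherP p))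
    simp only [Function.update_self] at h1
    simp only [Function.update_of_ne hne] at h2
    have h3 := Sum.inl.inj (Sum.inr.inj h2)
    rw [h1, (Prod.mk.inj h3).1]
  · intro x _
    simp
  · intro s _ hs
    by_contra h0
    apply hs
    have hA : assignProfile m Shat γ (Sum.inl (otherP p)) (s (Sum.inl (otherP p))) ≠ 0 := by
      intro h
      simp [h] at h0
    have hB : (∏ q : Fin k, assignProfile m Shat γ (Sum.inr q) (s (Sum.inr q))) ≠ 0 := by
      intro h
      simp [h] at h0
    obtain ⟨j, hj⟩ := assign_ne hA
    refine ⟨(s (Sum.inl p), j), by simp, ?_⟩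
    funext i
    by_cases hi : i = Sum.inl p
    · subst hi
      simp
    · refine (Function.update_of_ne hi _ _).trans ?_
      rcases i with q | q
      · rcases eq_or_otherP p q with rfl | rfl
        · exact absurd rfl hi
        · exact hj.symm
      · exact (assign_ne' (Finset.prod_ne_zero_iff.1 hB q (Finset.mem_univ _))).symm
  · rintro ⟨t, j⟩ _
    have hB : ∀ q : Fin k, assignProfile m Shat γ (Sum.inr q) (deltaStrat Shat q) = 1 :=
      fun q => rfl
    simp only [Function.update_self, Function.update_of_ne hne]
    have h1 : baseProf m Shat γ j (Sum.inl (otherP p)) = litStrat Shat (otherP p) j (γ j) := rfl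
    rw [h1, assign_lit]
    have h2 : ∀ q : Fin k, (Function.update (baseProf m Shat γ j) (Sum.inl p) t) (Sum.inr q)
        = deltaStrat Shat q := by
      intro q
      rw [Function.update_of_ne (by simp)]
      rfl
    simp only [h2, hB, Finset.prod_const_one]
    ring

/-! ### Values of the utility function -/

theorem base_none {k n m : ℕ} (Shat : Player k → Type) (γ : Fin n → Bool) (j : Fin n)
    (i : Player k) : toGadget Shat i (baseProf m Shat γ j i) = none := by
  rcases i with p | q <;> rfl

theorem BigU_none {k n m : ℕ} (Shat : Player k → Type) [∀ i, Fintype (Shat i)]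
    (Uhat : (i : Player k) → (∀ j, Shat j) → ℝ) (Cl : Fin m → Finset (Lit n))
    (i : Player k) (s : ∀ j, Strat Shat n m j) (hs : ∀ j, toGadget Shat j (s j) = none) :
    BigU Shat Uhat Cl i s = match specialOf Shat 0 s, specialOf Shat 1 s with
    | .inr a₁, .inr a₂ =>
        (match i with
         | .inl p => if p = 0 then (pairU Cl a₁ a₂).1 else (pairU Cl a₁ a₂).2.1
         | .inr _ => (pairU Cl a₁ a₂).2.2)
    | _, _ => 0 := by
  unfold BigU
  rw [dif_neg, if_neg, if_neg]
  · simp [hs]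
  · simp [hs]
  · intro h
    have := h (Sum.inl 0)
    simp [hs] at this

theorem update_none {k n m : ℕ} (Shat : Player k → Type) (γ : Fin n → Bool) (j : Fin n)
    (p : Fin 2) (a : SpecialAux n m) (i : Player k) :
    toGadget Shat i (Function.update (baseProf m Shat γ j) (Sum.inl p)
      (auxS Shat p a) i) = none := by
  by_cases hi : i = Sum.inl p
  · subst hi
    rw [Function.update_self]
    rfl
  · rw [Function.update_of_ne hi]
    exact base_none Shat γ j i

theorem BigU_zero {k n m : ℕ} (Shat : Player k → Type) [∀ i, Fintype (Shat i)]
    (Uhat : (i : Player k) → (∀ j, Shat j) → ℝ) (Cl : Fin m → Finset (Lit n))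
    (γ : Fin n → Bool) (j : Fin n) (a : SpecialAux n m) :
    BigU Shat Uhat Cl (Sum.inl 0) (Function.update (baseProf m Shat γ j) (Sum.inl 0)
      (auxS Shat 0 a)) = (pairU Cl a (.inl (j, γ j))).1 := by
  rw [BigU_none _ _ _ _ _ (update_none Shat γ j 0 a)]
  have h0 : specialOf Shat 0 (Function.update (baseProf m Shat γ j) (Sum.inl 0)
      (auxS Shat 0 a)) = Sum.inr a := by
    unfold specialOf
    rw [Function.update_self]
    rfl
  have h1 : specialOf Shat 1 (Function.update (baseProf m Shat γ j) (Sum.inl 0)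
      (auxS Shat 0 a)) = Sum.inr (Sum.inl (j, γ j)) := by
    unfold specialOf
    rw [Function.update_of_ne (fun h => absurd (Sum.inl.inj h) (by decide))]
    rfl
  rw [h0, h1]
  simp

theorem BigU_one {k n m : ℕ} (Shat : Player k → Type) [∀ i, Fintype (Shat i)]
    (Uhat : (i : Player k) → (∀ j, Shat j) → ℝ) (Cl : Fin m → Finset (Lit n))
    (γ : Fin n → Bool) (j : Fin n) (a : SpecialAux n m) :
    BigU Shat Uhat Cl (Sum.inl 1) (Function.update (baseProf m Shat γ j) (Sum.inl 1)
      (auxS Shat 1 a)) = (pairU Cl (.inl (j, γ j)) a).2.1 := by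
  rw [BigU_none _ _ _ _ _ (update_none Shat γ j 1 a)]
  have h0 : specialOf Shat 1 (Function.update (baseProf m Shat γ j) (Sum.inl 1)
      (auxS Shat 1 a)) = Sum.inr a := by
    unfold specialOf
    rw [Function.update_self]
    rfl
  have h1 : specialOf Shat 0 (Function.update (baseProf m Shat γ j) (Sum.inl 1)
      (auxS Shat 1 a)) = Sum.inr (Sum.inl (j, γ j)) := by
    unfold specialOf
    rw [Function.update_of_ne (fun h => absurd (Sum.inl.inj h) (by decide))]
    rfl
  rw [h0, h1]
  simp

theorem BigU_gadget {k n m : ℕ} (Shat : Player k → Type) [∀ i, Fintype (Shat i)]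
    (Uhat : (i : Player k) → (∀ j, Shat j) → ℝ) (Cl : Fin m → Finset (Lit n))
    (γ : Fin n → Bool) (j : Fin n) (p : Fin 2) (a : Shat (Sum.inl p)) :
    BigU Shat Uhat Cl (Sum.inl p) (Function.update (baseProf m Shat γ j) (Sum.inl p)
      (gadS Shat p a)) = if j.val ≤ 1 then 1 else 0 := by
  set s : ∀ i, Strat Shat n m i := Function.update (baseProf m Shat γ j) (Sum.inl p)
      (gadS Shat p a) with hs
  have hp : toGadget Shat (Sum.inl p) (s (Sum.inl p)) = some a := by
    rw [hs, Function.update_self]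
    rfl
  have hq : ∀ i, i ≠ Sum.inl p → toGadget Shat i (s i) = none := by
    intro i hi
    rw [hs, Function.update_of_ne hi]
    exact base_none Shat γ j i
  have hne : (Sum.inl (otherP p) : Player k) ≠ Sum.inl p := by
    intro h
    exact otherP_ne p (Sum.inl.inj h)
  have hfil : (univ.filter fun i => (toGadget Shat i (s i)).isSome = true) = {Sum.inl p} := by
    ext i
    simp only [Finset.mem_filter, Finset.mem_univ, true_and, Finset.mem_singleton]
    constructor
    · intro h
      by_contra hi
      rw [hq i hi] at h
      simp at h
    · rintro rfl
      rw [hp]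
      rfl
  have hsp : specialOf Shat (otherP p) s = Sum.inr (Sum.inl (j, γ j)) := by
    unfold specialOf
    rw [hs, Function.update_of_ne hne]
    rfl
  unfold BigU
  rw [dif_neg, hfil, if_neg, if_pos, if_pos]
  · simp only [hsp]
    simp [allowedB]
  · rw [hp]
    rfl
  · simp
  · simp
  · intro h
    have := h (Sum.inl (otherP p))
    rw [hq _ hne] at this
    simp at this

theorem pairU_le {n m : ℕ} (Cl : Fin m → Finset (Lit n)) (a b : SpecialAux n m) :
    (pairU Cl a b).1 ≤ 1 ∧ (pairU Cl a b).2.1 ≤ 1 ∧ (pairU Cl a b).2.2 ≤ 1 := by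
  rcases a with l | c | v <;> rcases b with l' | c' | v' <;> simp only [pairU] <;>
    (try split_ifs) <;> norm_num

theorem BigU_le {k n m : ℕ} (Shat : Player k → Type) [∀ i, Fintype (Shat i)]
    (Uhat : (i : Player k) → (∀ j, Shat j) → ℝ)
    (hWL : ∀ i s, Uhat i s = 0 ∨ Uhat i s = 1) (Cl : Fin m → Finset (Lit n))
    (i : Player k) (s : ∀ j, Strat Shat n m j) : BigU Shat Uhat Cl i s ≤ 1 := by
  unfold BigU
  split_ifs with h1 h2 h3 h4 h5
  · rcases hWL i (fun j => (toGadget Shat j (s j)).get (h1 j)) with h | h <;> rw [h] <;> norm_num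
  · norm_num
  · norm_num
  · rcases i with p | q
    · dsimp only
      split_ifs <;> norm_num
    · exact le_refl _
  · norm_num
  · rcases specialOf Shat 0 s with x | x <;> rcases specialOf Shat 1 s with y | y
    · norm_num
    · norm_num
    · norm_num
    · rcases i with p | q
      · dsimp only
        split_ifs
        · exact (pairU_le Cl x y).1
        · exact (pairU_le Cl x y).2.1
      · exact (pairU_le Cl x y).2.2

/-! ### Counting -/

theorem sum_two {n : ℕ} (P : Fin n → Prop) [DecidablePred P] (x y : Fin n) (hxy : x ≠ y)
    (h : ∀ j, P j ↔ j = x ∨ j = y) :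
    ∑ j : Fin n, 1 / (n : ℝ) * (if P j then (1 : ℝ) else 0) = 2 / n := by
  rw [← Finset.mul_sum, Finset.sum_boole]
  have : (univ.filter fun j => P j) = {x, y} := by
    ext j
    simp [h]
  rw [this, Finset.card_pair hxy]
  push_cast
  ring

theorem sum_le_two {n : ℕ} (f : Fin n → ℝ) (S : Finset (Fin n)) (hS : S.card ≤ 2)
    (h : ∀ j, f j ≤ if j ∈ S then 1 else 0) :
    ∑ j : Fin n, 1 / (n : ℝ) * f j ≤ 2 / n := by
  rw [← Finset.mul_sum]
  have h1 : ∑ j, f j ≤ 2 := by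
    calc ∑ j, f j ≤ ∑ j, (if j ∈ S then (1 : ℝ) else 0) := Finset.sum_le_sum fun j _ => h j
      _ = S.card := by simp
      _ ≤ 2 := by exact_mod_cast hS
  calc 1 / (n : ℝ) * ∑ j, f j ≤ 1 / (n : ℝ) * 2 := by gcongr
    _ = 2 / n := by ring

theorem cyc {n a b : ℕ} (ha : a < n) (hb : b < n) :
    (b + n - a) % n = if a ≤ b then b - a else b + n - a := by
  split_ifs with h
  · have : b + n - a = (b - a) + n := by omega
    rw [this, Nat.add_mod_right, Nat.mod_eq_of_lt (by omega)]
  · exact Nat.mod_eq_of_lt (by omega)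

/-- The element of `Fin n` which is `d` steps after `j`. -/
def shift {n : ℕ} (j : Fin n) (d : ℕ) : Fin n :=
  ⟨(j.val + d) % n, Nat.mod_lt _ (by have := j.2; omega)⟩

theorem shift_val {n : ℕ} (j : Fin n) (d : ℕ) (hd : d ≤ n) :
    (shift j d).val = if j.val + d < n then j.val + d else j.val + d - n := by
  have := j.2
  unfold shift
  dsimp only
  split_ifs with h
  · exact Nat.mod_eq_of_lt h
  · rw [Nat.mod_eq_sub_mod (by omega), Nat.mod_eq_of_lt (by omega)]

theorem cyc_zero {n : ℕ} (hn : 4 ≤ n) (i j : Fin n) :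
    (j.val + n - i.val) % n ≤ 1 ↔ j = i ∨ j = shift i 1 := by
  rw [cyc i.2 j.2, Fin.ext_iff, Fin.ext_iff, shift_val i 1 (by omega)]
  have := i.2
  have := j.2
  split_ifs <;> omega

theorem cyc_one {n : ℕ} (hn : 4 ≤ n) (i j : Fin n) :
    (¬ (i.val + n - j.val) % n ≤ 1 ∧ (i.val + n - j.val) % n ≤ 3) ↔
      j = shift i (n - 2) ∨ j = shift i (n - 3) := by
  rw [cyc j.2 i.2, Fin.ext_iff, Fin.ext_iff, shift_val i (n - 2) (by omega),
    shift_val i (n - 3) (by omega)]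
  have := i.2
  have := j.2
  split_ifs <;> omega

theorem clause_set {n m : ℕ} (Cl : Fin m → Finset (Lit n)) (h3 : ∀ c, (Cl c).card = 3)
    (γ : Fin n → Bool) (hγ : Satisfies Cl γ) (c : Fin m) :
    (univ.filter fun j => (j, !γ j) ∈ Cl c).card ≤ 2 := by
  obtain ⟨l, hl, hl'⟩ := hγ c
  have h2 : ((Cl c).erase l).card = 2 := by
    rw [Finset.card_erase_of_mem hl, h3]
  rw [← h2]
  apply Finset.card_le_card_of_injOn (fun j => (j, !γ j))
  · intro j hj
    simp only [Finset.coe_filter, Finset.mem_univ, true_and, Set.mem_ofPred_eq] at hj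
    simp only [Finset.coe_erase, Set.mem_sdiff, Finset.mem_coe, Set.mem_singleton_iff]
    refine ⟨hj, ?_⟩
    rintro rfl
    simp at hl'
  · intro x _ y _ h
    exact (Prod.mk.inj h).1

section values
variable {k n m : ℕ} (Shat : Player k → Type) [∀ i, Fintype (Shat i)]
    (Uhat : (i : Player k) → (∀ j, Shat j) → ℝ)
    (Cl : Fin m → Finset (Lit n)) (γ : Fin n → Bool)

/-- Expected utility of the pure strategy `t` of the special player `p` against `σ(γ)`. -/
noncomputable def pureVal (p : Fin 2) (t : Strat Shat n m (Sum.inl p)) : ℝ :=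
  ∑ j : Fin n, 1 / (n : ℝ) *
    BigU Shat Uhat Cl (Sum.inl p) (Function.update (baseProf m Shat γ j) (Sum.inl p) t)

theorem pureVal_lit (hn : 4 ≤ n) (p : Fin 2) (i : Fin n) :
    pureVal Shat Uhat Cl γ p (litStrat Shat p i (γ i)) = 2 / n := by
  unfold pureVal litStrat
  fin_cases p
  · rw [← sum_two (fun j => j = i ∨ j = shift i 1) i (shift i 1) _ (fun j => Iff.rfl)]
    · refine Finset.sum_congr rfl fun j _ => ?_
      congr 1
      refine (BigU_zero Shat Uhat Cl γ j _).trans ?_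
      simp only [pairU, ← cyc_zero hn i j]
      rw [if_neg]
      · split_ifs <;> rfl
      · intro h
        have h' := Prod.mk.inj h
        rw [h'.1] at h'
        simp at h'
    · intro h
      rw [Fin.ext_iff, shift_val _ _ (by omega)] at h
      have := i.2
      split_ifs at h <;> omega
  · rw [← sum_two (fun j => j = shift i (n - 2) ∨ j = shift i (n - 3)) (shift i (n - 2))
      (shift i (n - 3)) _ (fun j => Iff.rfl)]
    · refine Finset.sum_congr rfl fun j _ => ?_
      congr 1
      refine (BigU_one Shat Uhat Cl γ j _).trans ?_
      simp only [pairU, ← cyc_one hn i j]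
      rw [if_neg]
      · split_ifs <;> first | rfl | (exfalso; omega)
      · intro h
        have h' := Prod.mk.inj h
        rw [h'.1] at h'
        simp at h'
    · intro h
      rw [Fin.ext_iff, shift_val _ _ (by omega), shift_val _ _ (by omega)] at h
      have := i.2
      split_ifs at h <;> omega

theorem pureVal_le (hn : 4 ≤ n) (h3 : ∀ c, (Cl c).card = 3) (hγ : Satisfies Cl γ) (p : Fin 2)
    (t : Strat Shat n m (Sum.inl p)) :
    pureVal Shat Uhat Cl γ p t ≤ 2 / n := by
  unfold pureVal
  rcases t with a | a
  · apply sum_le_two _ {⟨0, by omega⟩, ⟨1, by omega⟩} Finset.card_le_two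
    intro j
    refine le_of_eq ((BigU_gadget Shat Uhat Cl γ j p a).trans ?_)
    congr 1
    simp only [Finset.mem_insert, Finset.mem_singleton, Fin.ext_iff, eq_iff_iff]
    omega
  · fin_cases p
    · have hB := fun j => BigU_zero Shat Uhat Cl γ j a
      rcases a with l | c | v
      · apply sum_le_two _ {l.1, shift l.1 1} Finset.card_le_two
        intro j
        refine le_trans (le_of_eq (hB j)) ?_
        simp only [pairU, Finset.mem_insert, Finset.mem_singleton, ← cyc_zero hn l.1 j]
        split_ifs <;> norm_num
      · apply sum_le_two _ _ (clause_set Cl h3 γ hγ c)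
        intro j
        refine le_trans (le_of_eq (hB j)) ?_
        simp only [pairU, Finset.mem_filter, Finset.mem_univ, true_and]
        split_ifs <;> norm_num
      · apply sum_le_two _ {v.1.1, v.1.2} Finset.card_le_two
        intro j
        refine le_trans (le_of_eq (hB j)) ?_
        simp only [pairU, Finset.mem_insert, Finset.mem_singleton]
        split_ifs <;> norm_num
    · have hB := fun j => BigU_one Shat Uhat Cl γ j a
      rcases a with l | c | v
      · apply sum_le_two _ {shift l.1 (n - 2), shift l.1 (n - 3)} Finset.card_le_two
        intro j
        refine le_trans (le_of_eq (hB j)) ?_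
        simp only [pairU, Finset.mem_insert, Finset.mem_singleton, ← cyc_one hn l.1 j]
        split_ifs <;> first | (exfalso; omega) | norm_num
      · apply sum_le_two _ _ (clause_set Cl h3 γ hγ c)
        intro j
        refine le_trans (le_of_eq (hB j)) ?_
        simp only [pairU, Finset.mem_filter, Finset.mem_univ, true_and]
        split_ifs <;> norm_num
      · apply sum_le_two _ {v.1.1, v.1.2} Finset.card_le_two
        intro j
        refine le_trans (le_of_eq (hB j)) ?_
        simp only [pairU, Finset.mem_insert, Finset.mem_singleton]
        split_ifs <;> norm_num

theorem EU_special (hn : 4 ≤ n) (p : Fin 2) :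
    EU (BigU Shat Uhat Cl) (assignProfile m Shat γ) (Sum.inl p) = 2 / (n : ℝ) := by
  have h := EU_update Shat γ (BigU Shat Uhat Cl) p (assignProfile m Shat γ (Sum.inl p))
  rw [Function.update_eq_self] at h
  rw [h]
  have h1 : ∀ t, assignProfile m Shat γ (Sum.inl p) t * pureVal Shat Uhat Cl γ p t =
      assignProfile m Shat γ (Sum.inl p) t * (2 / n) := by
    intro t
    by_cases h0 : assignProfile m Shat γ (Sum.inl p) t = 0
    · rw [h0, zero_mul, zero_mul]
    · obtain ⟨j, rfl⟩ := assign_ne h0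
      rw [pureVal_lit Shat Uhat Cl γ hn]
  refine (Finset.sum_congr rfl fun t _ => h1 t).trans ?_
  rw [← Finset.sum_mul, (assign_isDist m hn Shat γ (Sum.inl p)).2, one_mul]

end values

theorem sum_profile {k : ℕ} {S : Player k → Type} [∀ i, Fintype (S i)]
    (σ : ∀ j, S j → ℝ) (h : ∀ i, IsDist (σ i)) : ∑ s : ∀ j, S j, ∏ j, σ j (s j) = 1 := by
  rw [← Fintype.prod_sum]
  exact Finset.prod_eq_one fun i _ => (h i).2

theorem EU_le_one {k : ℕ} {S : Player k → Type} [∀ i, Fintype (S i)]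
    (U : (i : Player k) → (∀ j, S j) → ℝ) (σ : ∀ j, S j → ℝ) (h : ∀ i, IsDist (σ i))
    (i : Player k) (hU : ∀ s, U i s ≤ 1) : EU U σ i ≤ 1 := by
  rw [← sum_profile σ h]
  refine Finset.sum_le_sum fun s _ => ?_
  exact mul_le_of_le_one_right (Finset.prod_nonneg fun j _ => (h j).1 _) (hU s)

theorem EU_delta {k n m : ℕ} (hn : 4 ≤ n) (Shat : Player k → Type) [∀ i, Fintype (Shat i)]
    (Uhat : (i : Player k) → (∀ j, Shat j) → ℝ)
    (Cl : Fin m → Finset (Lit n)) (γ : Fin n → Bool) (q : Fin k) :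
    EU (BigU Shat Uhat Cl) (assignProfile m Shat γ) (Sum.inr q) = 1 := by
  rw [← sum_profile (assignProfile m Shat γ) (assign_isDist m hn Shat γ)]
  refine Finset.sum_congr rfl fun s _ => ?_
  by_cases h0 : (∏ j, assignProfile m Shat γ j (s j)) = 0
  · rw [h0, zero_mul]
  · have h1 := fun j => Finset.prod_ne_zero_iff.1 h0 j (Finset.mem_univ _)
    obtain ⟨x, hx⟩ := assign_ne (h1 (Sum.inl 0))
    obtain ⟨y, hy⟩ := assign_ne (h1 (Sum.inl 1))
    rw [BigU_none]
    · have hx' : specialOf Shat 0 s = Sum.inr (Sum.inl (x, γ x)) := hx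
      have hy' : specialOf Shat 1 s = Sum.inr (Sum.inl (y, γ y)) := hy
      rw [hx', hy']
      simp only [pairU]
      split_ifs <;> simp
    · rintro (p | q)
      · obtain ⟨j, hj⟩ := assign_ne (h1 (Sum.inl p))
        rw [hj]
        rfl
      · rw [assign_ne' (h1 (Sum.inr q))]
        rfl

/-- For the win-lose game `G = G(Ĝ, φ)` built from an `r`-player win-lose gadget game
`Ĝ` with the positive utility property and a 3SAT formula `φ` with `n ≥ 4` variables:
for each satisfying assignment `γ` of `φ`, the mixed profile `σ(γ)` is a Nash
equilibrium of `G` not belonging to `NE(Ĝ)`; moreover it is symmetric (the two special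
players play the same mixed strategy), each special player has support of size exactly
`n` and expected utility `2/n`, and the special players' supports avoid the gadget
strategies. -/
theorem reduction_satisfying_assignment_nash
    {k n m : ℕ} (hn : 4 ≤ n)
    (Shat : Player k → Type) [∀ i, Fintype (Shat i)] [∀ i, Nonempty (Shat i)]
    (Uhat : (i : Player k) → (∀ j, Shat j) → ℝ)
    (hWL : ∀ i s, Uhat i s = 0 ∨ Uhat i s = 1)
    (hPUP : ∀ (i : Player k) (s : ∀ j, Shat j), ∃ t, 0 < Uhat i (Function.update s i t))
    (Cl : Fin m → Finset (Lit n)) (h3 : ∀ c, (Cl c).card = 3)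
    (γ : Fin n → Bool) (hγ : Satisfies Cl γ) :
    IsNashEq (BigU Shat Uhat Cl) (assignProfile m Shat γ) ∧
    (¬ ∃ σh : ∀ i, Shat i → ℝ,
      IsNashEq Uhat σh ∧ assignProfile m Shat γ = liftProfile Shat σh) ∧
    (∀ a : SpecialAux n m,
      assignProfile m Shat γ (Sum.inl 0) (Sum.inr a) =
        assignProfile m Shat γ (Sum.inl 1) (Sum.inr a)) ∧
    (∀ p : Fin 2,
      {t : Strat Shat n m (Sum.inl p) |
        0 < assignProfile m Shat γ (Sum.inl p) t}.ncard = n) ∧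
    (∀ p : Fin 2,
      EU (BigU Shat Uhat Cl) (assignProfile m Shat γ) (Sum.inl p) = 2 / (n : ℝ)) ∧
    (∀ (p : Fin 2) (a : Shat (Sum.inl p)),
      assignProfile m Shat γ (Sum.inl p) (Sum.inl a) = 0) := by
  have hn0 : (0 : ℝ) < n := by
    have : 0 < n := by omega
    exact_mod_cast this
  refine ⟨⟨assign_isDist m hn Shat γ, ?_⟩, ?_, ?_, ?_, EU_special Shat Uhat Cl γ hn, ?_⟩
  · rintro (p | q) τ hτ
    · rw [EU_special Shat Uhat Cl γ hn, EU_update]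
      calc ∑ t, τ t * pureVal Shat Uhat Cl γ p t ≤ ∑ t, τ t * (2 / (n : ℝ)) :=
            Finset.sum_le_sum fun t _ => mul_le_mul_of_nonneg_left
              (pureVal_le Shat Uhat Cl γ hn h3 hγ p t) (hτ.1 t)
        _ = 2 / n := by rw [← Finset.sum_mul, hτ.2, one_mul]
    · rw [EU_delta hn]
      apply EU_le_one
      · intro i
        by_cases hi : i = Sum.inr q
        · subst hi
          rwa [Function.update_self]
        · rw [Function.update_of_ne hi]
          exact assign_isDist m hn Shat γ i
      · exact BigU_le Shat Uhat hWL Cl _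
  · rintro ⟨σh, -, h⟩
    have h1 := congrFun (congrFun h (Sum.inl 0)) (litStrat Shat 0 ⟨0, by omega⟩ (γ ⟨0, by omega⟩))
    rw [assign_lit] at h1
    have h2 : 1 / (n : ℝ) = 0 := h1
    have : 0 < 1 / (n : ℝ) := by positivity
    linarith
  · intro a
    rcases a with l | c <;> rfl
  · intro p
    have : {t : Strat Shat n m (Sum.inl p) | 0 < assignProfile m Shat γ (Sum.inl p) t} =
        (fun j : Fin n => litStrat Shat p j (γ j)) '' Set.univ := by
      ext t
      simp only [Set.mem_ofPred_eq, Set.image_univ, Set.mem_range]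
      constructor
      · intro h
        obtain ⟨j, hj⟩ := assign_ne h.ne'
        exact ⟨j, hj.symm⟩
      · rintro ⟨j, rfl⟩
        rw [assign_lit]
        positivity
    rw [this, Set.ncard_image_of_injective]
    · simp
    · intro x y h
      exact (Prod.mk.inj (Sum.inl.inj (Sum.inr.inj h))).1
  · intro p a
    rfl
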